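/- Let $R > 0$ and for $0 \le \gamma \le R$ let $A_s(\gamma) = 2R^2 \arccos\!\big(\tfrac{\gamma}{2R}\big) - \gamma\sqrt{R^2 - \tfrac{\gamma^2}{4}}$. Then $\int_0^R A_s(r)\, \tfrac{2r}{R^2}\, dr = \big(\pi - \tfrac{3\sqrt{3}}{4}\big) R^2$. (Numerically, $\pi - \tfrac{3\sqrt{3}}{4} \approx 1.84$, giving the paper's claim $\mathbb{E}[K_{ij}] \approx 1.84\, n$.) -/

import Mathlib

/-!
Moving the two centres apart shrinks the lens at the rate of its common chord: if
`s γ = √(R² - γ² / 4)` is the half-chord, then `A_s' = -2 s`. Moreover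
`(γ s³)' = (R² - γ²) s`, so `(γ² - R²) A_s γ - 2 γ (s γ)³` is a primitive of `2 γ A_s γ`, whose
first term vanishes at `γ = R`.
-/

/-- Half the length of the common chord of two circles of radius `R` whose centres are at
distance `γ`; the chord lies at distance `γ / 2` from either centre. The value is `0` when
`2 * |R| ≤ |γ|`. -/
noncomputable def lensHalfChord (R γ : ℝ) : ℝ :=
  √(R ^ 2 - γ ^ 2 / 4)

/-- The area `A_s(γ)` of the intersection of two disks of radius `R` whose centres are at distance
`γ`, given by the closed formula (two circular sectors minus a rhombus), which has this meaning for
`0 ≤ γ ≤ 2 * R`. -/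
noncomputable def lensArea (R γ : ℝ) : ℝ :=
  2 * R ^ 2 * Real.arccos (γ / (2 * R)) - γ * lensHalfChord R γ

section

variable {R γ : ℝ}

theorem sq_sub_sq_div_four_pos (hγ : |γ| < 2 * R) : 0 < R ^ 2 - γ ^ 2 / 4 := by
  have : γ ^ 2 < (2 * R) ^ 2 := sq_lt_sq.mpr (hγ.trans_le (le_abs_self _))
  linarith

theorem lensHalfChord_pos (hγ : |γ| < 2 * R) : 0 < lensHalfChord R γ :=
  Real.sqrt_pos.mpr (sq_sub_sq_div_four_pos hγ)

theorem sq_lensHalfChord (hγ : |γ| < 2 * R) : lensHalfChord R γ ^ 2 = R ^ 2 - γ ^ 2 / 4 :=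
  Real.sq_sqrt (sq_sub_sq_div_four_pos hγ).le

theorem sqrt_one_sub_div_two_mul_sq (hR : 0 < R) (γ : ℝ) :
    √(1 - (γ / (2 * R)) ^ 2) = lensHalfChord R γ / R := by
  have h : 1 - (γ / (2 * R)) ^ 2 = (R ^ 2 - γ ^ 2 / 4) / R ^ 2 := by
    field_simp
    ring
  rw [h, Real.sqrt_div' _ (sq_nonneg R), Real.sqrt_sq hR.le, lensHalfChord]

theorem lensHalfChord_self (hR : 0 ≤ R) : lensHalfChord R R = √3 / 2 * R := by
  have h : R ^ 2 - R ^ 2 / 4 = 3 * (R / 2) ^ 2 := by ring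
  rw [lensHalfChord, h, Real.sqrt_mul zero_le_three, Real.sqrt_sq (by positivity)]
  ring

theorem lensArea_zero (R : ℝ) : lensArea R 0 = Real.pi * R ^ 2 := by
  rw [lensArea, zero_div, Real.arccos_zero]
  ring

@[fun_prop]
theorem continuous_lensHalfChord (R : ℝ) : Continuous (lensHalfChord R) := by
  unfold lensHalfChord
  fun_prop

@[fun_prop]
theorem continuous_lensArea (R : ℝ) : Continuous (lensArea R) := by
  unfold lensArea
  fun_prop

theorem hasDerivAt_lensHalfChord (hγ : |γ| < 2 * R) :
    HasDerivAt (lensHalfChord R) (-γ / (4 * lensHalfChord R γ)) γ := by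
  have h := (((hasDerivAt_pow 2 γ).div_const 4).const_sub (R ^ 2)).sqrt
    (sq_sub_sq_div_four_pos hγ).ne'
  refine h.congr_deriv ?_
  rw [← lensHalfChord]
  have := (lensHalfChord_pos hγ).ne'
  field_simp
  norm_num

theorem hasDerivAt_arccos_div_two_mul (hγ : |γ| < 2 * R) :
    HasDerivAt (fun x ↦ Real.arccos (x / (2 * R))) (-1 / (2 * lensHalfChord R γ)) γ := by
  have hR : 0 < R := by linarith [abs_nonneg γ]
  obtain ⟨hlo, hhi⟩ : -1 < γ / (2 * R) ∧ γ / (2 * R) < 1 := by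
    rwa [← abs_lt, abs_div, abs_of_pos (by positivity : 0 < 2 * R), div_lt_one (by positivity)]
  have h := (Real.hasDerivAt_arccos hlo.ne' hhi.ne).comp γ ((hasDerivAt_id γ).div_const (2 * R))
  refine h.congr_deriv ?_
  rw [sqrt_one_sub_div_two_mul_sq hR]
  field_simp

theorem hasDerivAt_lensArea (hγ : |γ| < 2 * R) :
    HasDerivAt (lensArea R) (-2 * lensHalfChord R γ) γ := by
  have h := ((hasDerivAt_arccos_div_two_mul hγ).const_mul (2 * R ^ 2)).sub
    ((hasDerivAt_id γ).mul (hasDerivAt_lensHalfChord hγ))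
  refine h.congr_deriv ?_
  have := (lensHalfChord_pos hγ).ne'
  simp only [id]
  field_simp
  linear_combination 4 * sq_lensHalfChord hγ

theorem hasDerivAt_mul_lensHalfChord_pow_three (hγ : |γ| < 2 * R) :
    HasDerivAt (fun x ↦ x * lensHalfChord R x ^ 3) ((R ^ 2 - γ ^ 2) * lensHalfChord R γ) γ := by
  have h := (hasDerivAt_id γ).mul ((hasDerivAt_lensHalfChord hγ).pow 3)
  refine h.congr_deriv ?_
  have := (lensHalfChord_pos hγ).ne'
  simp only [id, Pi.pow_apply]
  field_simp
  linear_combination 4 * lensHalfChord R γ ^ 2 * sq_lensHalfChord hγ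

theorem hasDerivAt_lensArea_primitive (hγ : |γ| < 2 * R) :
    HasDerivAt (fun x ↦ (x ^ 2 - R ^ 2) * lensArea R x - 2 * (x * lensHalfChord R x ^ 3))
      (2 * γ * lensArea R γ) γ := by
  have h := (((hasDerivAt_pow 2 γ).sub_const (R ^ 2)).mul (hasDerivAt_lensArea hγ)).sub
    ((hasDerivAt_mul_lensHalfChord_pow_three hγ).const_mul 2)
  refine h.congr_deriv ?_
  push_cast
  ring

theorem integral_two_mul_mul_lensArea {ρ : ℝ} (hρ : |ρ| ≤ 2 * R) :
    ∫ r in (0 : ℝ)..ρ, 2 * r * lensArea R r =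
      Real.pi * R ^ 4 + (ρ ^ 2 - R ^ 2) * lensArea R ρ - 2 * (ρ * lensHalfChord R ρ ^ 3) := by
  rw [intervalIntegral.integral_eq_sub_of_hasDeriv_right
    (f := fun x ↦ (x ^ 2 - R ^ 2) * lensArea R x - 2 * (x * lensHalfChord R x ^ 3))]
  · rw [lensArea_zero]
    ring
  · fun_prop
  · intro x hx
    have hxρ : |x| < |ρ| := by grind
    exact (hasDerivAt_lensArea_primitive (hxρ.trans_le hρ)).hasDerivWithinAt
  · exact Continuous.intervalIntegrable (by fun_prop) 0 ρ

end

/-- Expected intersection area (Lemma 3(c) of the paper): with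
`A_s(γ) = 2R²·arccos(γ/(2R)) − γ·√(R² − γ²/4)` the lens area of two radius-`R`
disks at center distance `γ`, one has
`∫₀^R A_s(r) · (2r/R²) dr = (π − 3√3/4)·R² ≈ 1.84 R²`. -/
theorem expected_intersection_area (R : ℝ) (hR : 0 < R) :
    ∫ r in (0:ℝ)..R,
        (2 * R ^ 2 * Real.arccos (r / (2 * R)) -
          r * Real.sqrt (R ^ 2 - r ^ 2 / 4)) * (2 * r / R ^ 2) =
      (Real.pi - 3 * Real.sqrt 3 / 4) * R ^ 2 := by
  calc
    _ = ∫ r in (0 : ℝ)..R, 2 * r * lensArea R r / R ^ 2 := by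
      congr 1 with r
      rw [lensArea, lensHalfChord]
      ring
    _ = (Real.pi * R ^ 4 - 2 * (R * lensHalfChord R R ^ 3)) / R ^ 2 := by
      have h_abs : |R| ≤ 2 * R := by rw [abs_of_pos hR]; linarith
      rw [intervalIntegral.integral_div, integral_two_mul_mul_lensArea h_abs]
      ring
    _ = (Real.pi - 3 * √3 / 4) * R ^ 2 := by
      have h3 : √3 ^ 3 = 3 * √3 := by rw [pow_succ, Real.sq_sqrt zero_le_three]
      rw [lensHalfChord_self hR.le, mul_pow, div_pow, h3]
      field_simp
      ring
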